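/- For every a ∈ [−1,1] and all x, z ∈ [0,1] with x² + z² = 1, one has h((1 + a·x)/2) + h((1 + a·z)/2) ≥ 1 + h((1 + a)/2). Equivalently, the minimum of h((1+a·x)/2) + h((1+a·z)/2) over the arc {(x,z) : x,z ≥ 0, x² + z² = 1} is attained at the endpoints (x,z) = (1,0) or (0,1). -/

import Mathlib

/-!
The entropy deficit `D t = log 2 - H ((1 + t) / 2)` has the power series
`∑ k, t ^ (2 * k + 2) / ((2 * k + 1) * (2 * k + 2))`, with nonnegative coefficients and only even
powers of order at least two. Comparing terms gives `D (a * x) ≤ x ^ 2 * D a` for `|x| ≤ 1`, and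
adding this over several `x` whose squares sum to at most one gives the claim.
-/

/-- The base-2 binary entropy function `h(p) = -p·log₂ p - (1-p)·log₂(1-p)`. -/
noncomputable def binEnt (p : ℝ) : ℝ := -(p * Real.logb 2 p) - (1 - p) * Real.logb 2 (1 - p)

open Real Set

/-- The amount, in nats, by which the entropy of a coin of bias `t` (heads with probability
`(1 + t) / 2`) falls short of that of a fair coin. Nats make the coefficients of its power series
rational. -/
noncomputable def entropyDeficit (t : ℝ) : ℝ := log 2 - binEntropy ((1 + t) / 2)

namespace entropyDeficit

lemma continuous : Continuous entropyDeficit := by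
  unfold entropyDeficit
  fun_prop

lemma nonneg (t : ℝ) : 0 ≤ entropyDeficit t :=
  sub_nonneg.2 binEntropy_le_log_two

lemma eq_log_of_abs_lt_one {t : ℝ} (ht : |t| < 1) :
    entropyDeficit t = (t * (log (1 + t) - log (1 - t)) + log (1 - t ^ 2)) / 2 := by
  obtain ⟨ht_neg, ht_pos⟩ := abs_lt.1 ht
  have h_add : 1 + t ≠ 0 := by linarith
  have h_sub : 1 - t ≠ 0 := by linarith
  have h_compl : 1 - (1 + t) / 2 = (1 - t) / 2 := by ring
  have h_factor : 1 - t ^ 2 = (1 + t) * (1 - t) := by ring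
  rw [entropyDeficit, binEntropy, h_compl, h_factor, log_inv, log_inv, log_div h_add two_ne_zero,
    log_div h_sub two_ne_zero, log_mul h_add h_sub]
  ring

lemma hasSum_of_abs_lt_one {t : ℝ} (ht : |t| < 1) :
    HasSum (fun k : ℕ => t ^ (2 * k + 2) / ((2 * k + 1) * (2 * k + 2))) (entropyDeficit t) := by
  have h_log_ratio := (hasSum_log_sub_log_of_abs_lt_one ht).mul_left t
  have h_log_sq : HasSum (fun k : ℕ => (t ^ 2) ^ (k + 1) / (k + 1)) (-log (1 - t ^ 2)) :=
    hasSum_pow_div_log_of_abs_lt_one (by rwa [abs_pow, sq_lt_one_iff₀ (abs_nonneg t)])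
  rw [eq_log_of_abs_lt_one ht, ← sub_neg_eq_add]
  refine ((h_log_ratio.sub h_log_sq).div_const 2).congr_fun fun k => ?_
  field_simp
  ring

lemma mul_le_sq_mul_of_abs_lt_one {a x : ℝ} (ha : |a| < 1) (hx : |x| ≤ 1) :
    entropyDeficit (a * x) ≤ x ^ 2 * entropyDeficit a := by
  have hax : |a * x| < 1 := by
    rw [abs_mul]
    exact mul_lt_one_of_nonneg_of_lt_one_left (abs_nonneg a) ha hx
  refine hasSum_le (fun k => ?_) (hasSum_of_abs_lt_one hax)
    ((hasSum_of_abs_lt_one ha).mul_left (x ^ 2))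
  have h_even : Even (2 * k + 2) := even_two_mul (k + 1)
  have h_pow : x ^ (2 * k + 2) ≤ x ^ 2 := by
    rw [← h_even.pow_abs, ← sq_abs x]
    exact pow_le_pow_of_le_one (abs_nonneg x) hx (by lia)
  have h_nonneg : 0 ≤ a ^ (2 * k + 2) := h_even.pow_nonneg a
  calc (a * x) ^ (2 * k + 2) / ((2 * k + 1) * (2 * k + 2))
      = x ^ (2 * k + 2) * (a ^ (2 * k + 2) / ((2 * k + 1) * (2 * k + 2))) := by ring
    _ ≤ x ^ 2 * (a ^ (2 * k + 2) / ((2 * k + 1) * (2 * k + 2))) := by gcongr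

lemma mul_le_sq_mul {a x : ℝ} (ha : |a| ≤ 1) (hx : |x| ≤ 1) :
    entropyDeficit (a * x) ≤ x ^ 2 * entropyDeficit a := by
  have h_closure : a ∈ closure (Ioo (-1 : ℝ) 1) := by
    rw [closure_Ioo (by norm_num)]
    exact abs_le.1 ha
  exact le_on_closure (fun b hb => mul_le_sq_mul_of_abs_lt_one (abs_lt.2 hb) hx)
    (continuous.comp (continuous_mul_const x)).continuousOn
    (continuous.const_mul (x ^ 2)).continuousOn h_closure

lemma sum_mul_le_of_sum_sq_le_one {ι : Type*} {s : Finset ι} {a : ℝ} {x : ι → ℝ} (ha : |a| ≤ 1)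
    (hx : ∑ i ∈ s, x i ^ 2 ≤ 1) :
    ∑ i ∈ s, entropyDeficit (a * x i) ≤ entropyDeficit a := by
  have hx_abs : ∀ i ∈ s, |x i| ≤ 1 := fun i hi =>
    (sq_le_one_iff_abs_le_one _).1
      ((Finset.single_le_sum (fun j _ => sq_nonneg (x j)) hi).trans hx)
  calc ∑ i ∈ s, entropyDeficit (a * x i)
      ≤ ∑ i ∈ s, x i ^ 2 * entropyDeficit a :=
        Finset.sum_le_sum fun i hi => mul_le_sq_mul ha (hx_abs i hi)
    _ = (∑ i ∈ s, x i ^ 2) * entropyDeficit a := (Finset.sum_mul ..).symm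
    _ ≤ entropyDeficit a := mul_le_of_le_one_left (nonneg a) hx

end entropyDeficit

lemma binEnt_eq_binEntropy_div_log_two (p : ℝ) : binEnt p = binEntropy p / log 2 := by
  simp only [binEnt, binEntropy, logb, log_inv]
  ring

lemma one_sub_binEnt_eq_entropyDeficit_div_log_two (t : ℝ) :
    1 - binEnt ((1 + t) / 2) = entropyDeficit t / log 2 := by
  rw [binEnt_eq_binEntropy_div_log_two, entropyDeficit, sub_div,
    div_self (log_pos one_lt_two).ne']

theorem stmt_14_general {ι : Type*} (s : Finset ι) {a : ℝ} {x : ι → ℝ} (ha : |a| ≤ 1)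
    (hx : ∑ i ∈ s, x i ^ 2 ≤ 1) :
    ∑ i ∈ s, (1 - binEnt ((1 + a * x i) / 2)) ≤ 1 - binEnt ((1 + a) / 2) := by
  simp only [one_sub_binEnt_eq_entropyDeficit_div_log_two, ← Finset.sum_div]
  gcongr
  exact entropyDeficit.sum_mul_le_of_sum_sq_le_one ha hx

/-- For every `a ∈ [-1,1]` and all `x, z ∈ [0,1]` with `x² + z² = 1`,
`h((1 + a·x)/2) + h((1 + a·z)/2) ≥ 1 + h((1 + a)/2)`. -/
theorem stmt_14 (a : ℝ) (ha : a ∈ Set.Icc (-1 : ℝ) 1)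
    (x z : ℝ) (hx : x ∈ Set.Icc (0 : ℝ) 1) (hz : z ∈ Set.Icc (0 : ℝ) 1)
    (hxz : x ^ 2 + z ^ 2 = 1) :
    binEnt ((1 + a * x) / 2) + binEnt ((1 + a * z) / 2) ≥ 1 + binEnt ((1 + a) / 2) := by
  have h := stmt_14_general .univ (x := ![x, z]) (abs_le.2 ha) (by simpa using hxz.le)
  simp only [Fin.sum_univ_two, Matrix.cons_val_zero, Matrix.cons_val_one] at h
  linarith
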